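/- For the Dedekind psi function Ψ, ∑_{n ≤ x} Ψ(⌊x/n⌋)/⌊x/n⌋ = x · ∑_{m ≥ 1} Ψ(m)/(m²(m+1)) + O(x^{1/3} log x) as x → ∞. -/

import Mathlib

open Filter Finset

/-- The Dedekind psi function `Ψ = id ∗ μ²`, i.e. `Ψ(n) = ∑_{d ∣ n} d · μ(n/d)²`. -/
noncomputable def dedekindPsi (n : ℕ) : ℝ :=
  ∑ d ∈ n.divisors, (d : ℝ) * (ArithmeticFunction.moebius (n / d) : ℝ) ^ 2

/-!
Since `Ψ(m)/m = ∑_{d ∣ m} μ²(d)/d`, the sum is `∑_d μ²(d)/d · #{n ≤ x : d ∣ ⌊x/n⌋}`. By the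
Dirichlet hyperbola method, cutting at `n ≈ √(x/d)`, each count equals `c_d x` plus sums of the
sawtooth function over `x/(dn + 1)`, `x/(dn)` and `x/(dn) - 1/d` with `n ≤ √(x/d)`. Van der
Corput's second derivative test on dyadic blocks bounds these sums by `O((x/d)^{1/3} log x)`, and
summing this error against `μ²(d)/d` converges because `∑ d^{-4/3}` does.
-/

/-! ### Exponential sums -/

section ExponentialSums

open Real
open scoped FourierTransform fwdDiff

section Cotangent

variable {θ g : ℝ}

lemma two_mul_le_sin_pi_mul (hθ : 0 ≤ θ) (hg : g ∈ Set.Icc θ (1 - θ)) :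
    2 * θ ≤ sin (π * g) := by
  obtain ⟨hg₁, hg₂⟩ := hg
  have hπ := pi_pos
  rcases le_total g (1 / 2) with h | h
  · have := mul_le_sin (x := π * g) (by nlinarith) (by nlinarith)
    have : 2 / π * (π * g) = 2 * g := by field_simp
    linarith
  · have := mul_le_sin (x := π * (1 - g)) (by nlinarith) (by nlinarith)
    have : 2 / π * (π * (1 - g)) = 2 * (1 - g) := by field_simp
    have : sin (π * (1 - g)) = sin (π * g) := by rw [← sin_pi_sub]; ring_nf
    linarith

lemma abs_cot_pi_mul_le (hθ : 0 < θ) (hg : g ∈ Set.Icc θ (1 - θ)) :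
    |cot (π * g)| ≤ 1 / (2 * θ) := by
  have hs := two_mul_le_sin_pi_mul hθ.le hg
  rw [cot_eq_cos_div_sin, abs_div, abs_of_pos (a := sin _) (by linarith)]
  gcongr
  exact abs_cos_le_one _

lemma antitoneOn_cot : AntitoneOn cot (Set.Ioo 0 π) := by
  intro x hx y hy hxy
  rw [cot_eq_cos_div_sin, cot_eq_cos_div_sin,
    div_le_div_iff₀ (sin_pos_of_mem_Ioo hy) (sin_pos_of_mem_Ioo hx)]
  have : 0 ≤ sin (y - x) := sin_nonneg_of_nonneg_of_le_pi (by linarith) (by linarith [hx.1, hy.2])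
  rw [sin_sub] at this
  linarith

lemma one_sub_fourierChar (g : ℝ) :
    1 - (𝐞 g : ℂ) = -2 * sin (π * g) * (Complex.I * Complex.exp ((π * g : ℝ) * Complex.I)) := by
  have := Complex.cos_sq_add_sin_sq (π * g)
  rw [fourierChar_apply, Complex.exp_mul_I, Complex.exp_mul_I]
  push_cast
  rw [mul_assoc 2, Complex.cos_two_mul, Complex.sin_two_mul]
  linear_combination (-2 : ℂ) * this + 2 * Complex.sin (π * g) ^ 2 * Complex.I_sq

lemma norm_inv_one_sub_fourierChar_le (hθ : 0 < θ) (hg : g ∈ Set.Icc θ (1 - θ)) :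
    ‖(1 - (𝐞 g : ℂ))⁻¹‖ ≤ 1 / (4 * θ) := by
  have hs := two_mul_le_sin_pi_mul hθ.le hg
  rw [norm_inv, one_sub_fourierChar, norm_mul, norm_mul, norm_mul, Complex.norm_exp_ofReal_mul_I,
    Complex.norm_I, Complex.norm_real, norm_of_nonneg (by linarith), inv_eq_one_div, norm_neg,
    Complex.norm_ofNat, mul_one, mul_one]
  exact one_div_le_one_div_of_le (by positivity) (by linarith)

lemma inv_one_sub_fourierChar (hg : sin (π * g) ≠ 0) :
    (1 - (𝐞 g : ℂ))⁻¹ = 1 / 2 + (cot (π * g) / 2 : ℝ) * Complex.I := by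
  have hs : Complex.sin (π * g) ≠ 0 := by exact_mod_cast hg
  have := Complex.cos_sq_add_sin_sq (π * g)
  rw [inv_eq_of_mul_eq_one_right]
  rw [one_sub_fourierChar, Complex.exp_mul_I, cot_eq_cos_div_sin]
  push_cast
  field_simp
  linear_combination this - (Complex.sin (π * g) ^ 2 + Complex.cos (π * g) ^ 2 +
    Complex.I * Complex.sin (π * g) * Complex.cos (π * g)) * Complex.I_sq

lemma norm_inv_one_sub_fourierChar_sub_le {g' : ℝ} (hg : g ∈ Set.Ioo 0 1) (hg' : g' ∈ Set.Ioo 0 1)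
    (h : g ≤ g') :
    ‖(1 - (𝐞 g' : ℂ))⁻¹ - (1 - (𝐞 g : ℂ))⁻¹‖ ≤ (cot (π * g) - cot (π * g')) / 2 := by
  have mem {u : ℝ} (hu : u ∈ Set.Ioo 0 1) : π * u ∈ Set.Ioo 0 π :=
    ⟨mul_pos pi_pos hu.1, mul_lt_of_lt_one_right pi_pos hu.2⟩
  have hcot := antitoneOn_cot (mem hg) (mem hg') (by gcongr)
  rw [inv_one_sub_fourierChar (sin_pos_of_mem_Ioo (mem hg)).ne',
    inv_one_sub_fourierChar (sin_pos_of_mem_Ioo (mem hg')).ne', add_sub_add_left_eq_sub, ← sub_mul,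
    norm_mul, Complex.norm_I, mul_one, ← Complex.ofReal_sub, Complex.norm_real, norm_eq_abs,
    abs_of_nonpos (by linarith)]
  linarith

lemma fourierChar_eq_inv_smul_sub (hg : sin (π * g) ≠ 0) (t : ℝ) :
    (𝐞 t : ℂ) = (1 - (𝐞 g : ℂ))⁻¹ • (𝐞 t - 𝐞 (t + g) : ℂ) := by
  have hne : 1 - (𝐞 g : ℂ) ≠ 0 := by
    simpa [one_sub_fourierChar, -Complex.ofReal_sin] using hg
  rw [AddChar.map_add_eq_mul, Circle.coe_mul, ← mul_one_sub, smul_eq_mul, mul_comm (𝐞 t : ℂ),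
    inv_mul_cancel_left₀ hne]

end Cotangent

lemma fourierChar_add_intCast (t : ℝ) (k : ℤ) : 𝐞 (t + k) = 𝐞 t := by
  have : 𝐞 (k : ℝ) = 1 := by
    ext
    rw [fourierChar_apply, Circle.coe_one]
    convert Complex.exp_int_mul_two_pi_mul_I k using 2
    push_cast
    ring
  rw [AddChar.map_add_eq_mul, this, mul_one]

-- Summation by parts against the weights `(1 - 𝐞 (Δ a n))⁻¹`, whose variation telescopes because
-- their real part is `1 / 2` and their imaginary part is a cotangent.
lemma norm_sum_range_fourierChar_le {θ : ℝ} (hθ : 0 < θ) {a : ℕ → ℝ} {N : ℕ}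
    (ha : ∀ n < N, Δ_[1] a n ∈ Set.Icc θ (1 - θ)) (hmono : MonotoneOn (Δ_[1] a) (Set.Iio N)) :
    ‖∑ n ∈ range N, (𝐞 (a n) : ℂ)‖ ≤ 2 / θ := by
  obtain rfl | hN := Nat.eq_zero_or_pos N
  · simp only [range_zero, sum_empty, norm_zero]
    positivity
  let f (n : ℕ) : ℂ := (1 - (𝐞 (Δ_[1] a n) : ℂ))⁻¹
  let e (n : ℕ) : ℂ := 𝐞 (a n) - 𝐞 (a (n + 1))
  have mem {n : ℕ} (hn : n < N) : Δ_[1] a n ∈ Set.Ioo 0 1 :=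
    ⟨by linarith [(ha n hn).1], by linarith [(ha n hn).2]⟩
  have hfe : ∀ n ∈ range N, (𝐞 (a n) : ℂ) = f n • e n := by
    intro n hn
    have hs := two_mul_le_sin_pi_mul hθ.le (ha n (mem_range.1 hn))
    have := fourierChar_eq_inv_smul_sub (by linarith : sin (π * Δ_[1] a n) ≠ 0) (a n)
    rwa [fwdDiff, add_sub_cancel] at this
  have hE (n : ℕ) : ‖∑ i ∈ range n, e i‖ ≤ 2 := by
    rw [sum_range_sub' fun i ↦ (𝐞 (a i) : ℂ)]
    exact (norm_sub_le _ _).trans (by simp only [Circle.norm_coe]; norm_num)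
  have hvar : ‖∑ i ∈ range (N - 1), (f (i + 1) - f i) • ∑ j ∈ range (i + 1), e j‖ ≤
      cot (π * Δ_[1] a 0) - cot (π * Δ_[1] a (N - 1)) := by
    rw [← sum_range_sub' fun i ↦ cot (π * Δ_[1] a i)]
    refine norm_sum_le_of_le _ fun i hi ↦ ?_
    have hi : i + 1 < N := by have := mem_range.1 hi; omega
    have := norm_inv_one_sub_fourierChar_sub_le (mem (by omega)) (mem hi)
      (hmono (Set.mem_Iio.2 (by omega)) hi (Nat.le_succ i))
    rw [norm_smul]
    nlinarith [hE (i + 1), norm_nonneg (f (i + 1) - f i)]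
  rw [sum_congr rfl hfe, sum_range_by_parts]
  have hlast : ‖f (N - 1) • ∑ i ∈ range N, e i‖ ≤ 1 / (4 * θ) * 2 := by
    rw [norm_smul]
    gcongr
    exacts [norm_inv_one_sub_fourierChar_le hθ (ha _ (by omega)), hE N]
  have h₀ := (abs_le.1 (abs_cot_pi_mul_le hθ (ha 0 hN))).2
  have h₁ := (abs_le.1 (abs_cot_pi_mul_le hθ (ha (N - 1) (by omega)))).1
  calc _ ≤ 1 / (4 * θ) * 2 + (1 / (2 * θ) + 1 / (2 * θ)) :=
        (norm_sub_le _ _).trans (by linarith)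
    _ = 3 / 2 / θ := by field_simp; norm_num
    _ ≤ 2 / θ := by gcongr; norm_num

/-- The **Kusmin–Landau inequality**. -/
lemma norm_sum_Ico_fourierChar_le {θ : ℝ} (hθ : 0 < θ) {a : ℕ → ℝ} {p q : ℕ} (j : ℤ)
    (ha : ∀ n ∈ Ico p q, Δ_[1] a n ∈ Set.Icc (j + θ) (j + 1 - θ))
    (hmono : MonotoneOn (Δ_[1] a) (Set.Ico p q)) :
    ‖∑ n ∈ Ico p q, (𝐞 (a n) : ℂ)‖ ≤ 2 / θ := by
  let b (i : ℕ) : ℝ := a (p + i) - j * i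
  have hb (i : ℕ) : Δ_[1] b i = Δ_[1] a (p + i) - j := by
    simp only [fwdDiff, b, Nat.cast_add, Nat.cast_one, add_assoc]
    ring
  have hab (i : ℕ) : 𝐞 (a (p + i)) = 𝐞 (b i) := by
    rw [← fourierChar_add_intCast (b i) (j * i)]
    simp [b]
  simp only [sum_Ico_eq_sum_range, hab]
  refine norm_sum_range_fourierChar_le hθ (fun i hi ↦ ?_) fun i hi k hk hik ↦ ?_
  · have := ha (p + i) (by simp; omega)
    rw [hb]
    exact ⟨by linarith [this.1], by linarith [this.2]⟩
  · rw [hb, hb]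
    rw [Set.mem_Iio] at hi hk
    have := hmono (a := p + i) (b := p + k) ⟨by omega, by omega⟩ ⟨by omega, by omega⟩ (by omega)
    linarith

lemma norm_sum_fourierChar_le_card {ι : Type*} (s : Finset ι) (a : ι → ℝ) :
    ‖∑ i ∈ s, (𝐞 (a i) : ℂ)‖ ≤ #s :=
  (norm_sum_le _ _).trans_eq (by simp only [Circle.norm_coe, sum_const, nsmul_eq_mul, mul_one])

lemma exists_filter_range_eq_Ico {α : Type*} [Preorder α] {g : ℕ → α} {N : ℕ}
    (hg : MonotoneOn g (Set.Iio N)) {s : Set α} (hs : s.OrdConnected) [DecidablePred (· ∈ s)] :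
    ∃ p q, {n ∈ range N | g n ∈ s} = Ico p q := by
  obtain h | h := {n ∈ range N | g n ∈ s}.eq_empty_or_nonempty
  · exact ⟨0, 0, by simpa using h⟩
  · obtain ⟨hpN, hp⟩ := mem_filter.1 (min'_mem _ h)
    obtain ⟨hqN, hq⟩ := mem_filter.1 (max'_mem _ h)
    refine ⟨min' _ h, max' _ h + 1, ext fun n ↦ ⟨fun hn ↦ ?_, fun hn ↦ ?_⟩⟩
    · exact mem_Ico.2 ⟨min'_le _ _ hn, Nat.lt_succ_of_le (le_max' _ _ hn)⟩
    · obtain ⟨hpn, hnq⟩ := mem_Ico.1 hn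
      have hnq := Nat.le_of_lt_succ hnq
      have hnN : n < N := hnq.trans_lt (mem_range.1 hqN)
      exact mem_filter.2 ⟨mem_range.2 hnN, hs.out hp hq
        ⟨hg (mem_range.1 hpN) hnN hpn, hg hnN (mem_range.1 hqN) hnq⟩⟩

lemma norm_sum_filter_mem_Icc_fourierChar_le {θ : ℝ} (hθ : 0 < θ) {a : ℕ → ℝ} {N : ℕ}
    (hmono : MonotoneOn (Δ_[1] a) (Set.Iio N)) (j : ℤ) :
    ‖∑ n ∈ range N with Δ_[1] a n ∈ Set.Icc (j + θ) (j + 1 - θ), (𝐞 (a n) : ℂ)‖ ≤ 2 / θ := by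
  obtain ⟨p, q, hpq⟩ := exists_filter_range_eq_Ico hmono
    (Set.ordConnected_Icc (a := j + θ) (b := j + 1 - θ))
  have hmem {n : ℕ} (hn : n ∈ Ico p q) := mem_filter.1 (hpq ▸ hn)
  rw [hpq]
  refine norm_sum_Ico_fourierChar_le hθ j (fun n hn ↦ (hmem hn).2) (hmono.mono fun n hn ↦ ?_)
  exact mem_range.1 (hmem (mem_Ico.2 hn)).1

section SlowlyIncreasing

variable {g : ℕ → ℝ} {N : ℕ} {l : ℝ}

lemma monotoneOn_of_mul_sub_le_sub (hl : 0 ≤ l)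
    (hg : ∀ m n, m ≤ n → n < N → l * ((n : ℝ) - m) ≤ g n - g m) : MonotoneOn g (Set.Iio N) := by
  intro m _ n hn hmn
  have : (m : ℝ) ≤ n := by exact_mod_cast hmn
  nlinarith [hg m n hmn hn]

lemma card_filter_mem_Icc_le (hl : 0 < l) {w : ℝ} (hw : 0 ≤ w) (c : ℝ)
    (hg : ∀ m n, m ≤ n → n < N → l * ((n : ℝ) - m) ≤ g n - g m) :
    (#{n ∈ range N | g n ∈ Set.Icc c (c + w)} : ℝ) ≤ w / l + 1 := by
  obtain h | h := {n ∈ range N | g n ∈ Set.Icc c (c + w)}.eq_empty_or_nonempty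
  · rw [h, card_empty, Nat.cast_zero]
    positivity
  · obtain ⟨-, hp, -⟩ := mem_filter.1 (min'_mem _ h)
    obtain ⟨hqN, -, hq⟩ := mem_filter.1 (max'_mem _ h)
    have hpq := min'_le_max' _ h
    have hgrow := hg _ _ hpq (mem_range.1 hqN)
    have hcard : #{n ∈ range N | g n ∈ Set.Icc c (c + w)} ≤ #(Icc (min' _ h) (max' _ h)) :=
      card_le_card fun n hn ↦ mem_Icc.2 ⟨min'_le _ n hn, le_max' _ n hn⟩
    rw [Nat.card_Icc] at hcard
    calc (#{n ∈ range N | g n ∈ Set.Icc c (c + w)} : ℝ) ≤ (max' _ h + 1 - min' _ h : ℕ) := by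
          exact_mod_cast hcard
      _ = (max' _ h - min' _ h : ℝ) + 1 := by
          rw [Nat.cast_sub (by omega)]
          push_cast
          ring
      _ ≤ w / l + 1 := by
          gcongr
          rw [le_div_iff₀ hl]
          linarith

end SlowlyIncreasing

lemma sub_mem_Icc_of_fwdDiff_mem_Icc {l L : ℝ} {g : ℕ → ℝ} {N : ℕ}
    (h : ∀ n < N, Δ_[1] g n ∈ Set.Icc l L) {m n : ℕ} (hmn : m ≤ n) (hn : n ≤ N) :
    g n - g m ∈ Set.Icc (l * ((n : ℝ) - m)) (L * ((n : ℝ) - m)) := by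
  induction n, hmn using Nat.le_induction with
  | base => simp
  | succ n _ ih =>
    obtain ⟨hl, hL⟩ := ih (by omega)
    obtain ⟨hl', hL'⟩ := h n hn
    rw [fwdDiff] at hl' hL'
    push_cast
    constructor <;> linarith

-- Kusmin–Landau applies where the increment stays `√l / 2` away from the integers `j`, `j + 1`;
-- the remaining terms are few because the increments are `l`-separated.
lemma norm_sum_filter_floor_fourierChar_le {l : ℝ} (hl : 0 < l) (hl₁ : l ≤ 1) {a : ℕ → ℝ} {N : ℕ}
    (ha : ∀ m n, m ≤ n → n < N → l * ((n : ℝ) - m) ≤ Δ_[1] a n - Δ_[1] a m) (j : ℤ) :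
    ‖∑ n ∈ range N with ⌊Δ_[1] a n⌋ = j, (𝐞 (a n) : ℂ)‖ ≤ 7 / √l := by
  have hsqrt : 0 < √l := sqrt_pos.2 hl
  set θ := √l / 2 with hθ_def
  have hθ : 0 < θ := by positivity
  let block (c w : ℝ) : Finset ℕ := {n ∈ range N | Δ_[1] a n ∈ Set.Icc c (c + w)}
  let mid : Finset ℕ := {n ∈ range N | Δ_[1] a n ∈ Set.Icc (j + θ) (j + 1 - θ)}
  have hmid_sub : mid ⊆ {n ∈ range N | ⌊Δ_[1] a n⌋ = j} :=
    monotone_filter_right _ fun n _ hn ↦ Int.floor_eq_iff.2 ⟨by linarith [hn.1], by linarith [hn.2]⟩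
  have hrest_sub : {n ∈ range N | ⌊Δ_[1] a n⌋ = j} \ mid ⊆ block j θ ∪ block (j + 1 - θ) θ := by
    intro n
    simp only [block, mid, mem_union, mem_filter, Int.floor_eq_iff, Set.mem_Icc]
    grind
  have hmid : ‖∑ n ∈ mid, (𝐞 (a n) : ℂ)‖ ≤ 2 / θ :=
    norm_sum_filter_mem_Icc_fourierChar_le hθ (monotoneOn_of_mul_sub_le_sub hl.le ha) j
  have hrest : ‖∑ n ∈ {n ∈ range N | ⌊Δ_[1] a n⌋ = j} \ mid, (𝐞 (a n) : ℂ)‖ ≤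
      (θ / l + 1) + (θ / l + 1) := by
    calc _ ≤ (#({n ∈ range N | ⌊Δ_[1] a n⌋ = j} \ mid) : ℝ) := norm_sum_fourierChar_le_card _ _
      _ ≤ #(block j θ) + #(block (j + 1 - θ) θ) := by
          exact_mod_cast (card_le_card hrest_sub).trans (card_union_le _ _)
      _ ≤ _ := by gcongr <;> exact card_filter_mem_Icc_le hl hθ.le _ ha
  rw [← sum_sdiff hmid_sub]
  calc _ ≤ (θ / l + 1) + (θ / l + 1) + 2 / θ := norm_add_le_of_le hrest hmid
    _ = 5 / √l + 2 := by
      have : θ / l = 1 / √l / 2 := by rw [hθ_def, div_right_comm, sqrt_div_self']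
      rw [this, hθ_def]
      field_simp
      ring
    _ ≤ 5 / √l + 2 / √l := by
      gcongr
      rw [le_div_iff₀ hsqrt]
      linarith [sqrt_le_one.2 hl₁]
    _ = 7 / √l := by ring

/-- **Van der Corput's second derivative test**, for second differences. -/
lemma norm_sum_range_fourierChar_le_of_second_fwdDiff {l L : ℝ} (hl : 0 < l) {a : ℕ → ℝ} {N : ℕ}
    (h : ∀ n < N, Δ_[1] (Δ_[1] a) n ∈ Set.Icc l L) :
    ‖∑ n ∈ range N, (𝐞 (a n) : ℂ)‖ ≤ 7 * (L * N + 2) / √l := by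
  obtain rfl | hN := Nat.eq_zero_or_pos N
  · simp only [range_zero, sum_empty, norm_zero, Nat.cast_zero, mul_zero, zero_add]
    positivity
  have hlL : l ≤ L := (h 0 hN).1.trans (h 0 hN).2
  rcases lt_or_ge 1 l with hl₁ | hl₁
  · have hsqrt : √l ≤ l := sqrt_le_self_iff.2 (.inr hl₁.le)
    calc ‖∑ n ∈ range N, (𝐞 (a n) : ℂ)‖ ≤ N := by
          simpa only [card_range] using norm_sum_fourierChar_le_card (range N) a
      _ ≤ 7 * (L * N + 2) / √l := by
          rw [le_div_iff₀ (sqrt_pos.2 hl)]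
          nlinarith [(Nat.cast_nonneg N : (0 : ℝ) ≤ N)]
  set g := Δ_[1] a
  have hgrow (m n : ℕ) (hmn : m ≤ n) (hn : n < N) := sub_mem_Icc_of_fwdDiff_mem_Icc h hmn hn.le
  have hg := monotoneOn_of_mul_sub_le_sub hl.le fun m n hmn hn ↦ (hgrow m n hmn hn).1
  have hlast : N - 1 < N := by omega
  have hmaps : ∀ n ∈ range N, ⌊g n⌋ ∈ Icc ⌊g 0⌋ ⌊g (N - 1)⌋ := fun n hn ↦ by
    have hn := mem_range.1 hn
    exact mem_Icc.2 ⟨Int.floor_mono (hg hN hn (Nat.zero_le n)),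
      Int.floor_mono (hg hn hlast (by omega))⟩
  have hcard : (#(Icc ⌊g 0⌋ ⌊g (N - 1)⌋) : ℝ) ≤ L * N + 2 := by
    have hle : ⌊g 0⌋ ≤ ⌊g (N - 1)⌋ := Int.floor_mono (hg hN hlast (Nat.zero_le _))
    have hcast : (#(Icc ⌊g 0⌋ ⌊g (N - 1)⌋) : ℝ) = ⌊g (N - 1)⌋ + 1 - ⌊g 0⌋ := by
      exact_mod_cast Int.card_Icc_of_le _ _ (by omega)
    have hL := (hgrow 0 (N - 1) (Nat.zero_le _) hlast).2
    rw [Nat.cast_sub hN, Nat.cast_zero, Nat.cast_one] at hL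
    rw [hcast]
    linarith [Int.floor_le (g (N - 1)), Int.lt_floor_add_one (g 0)]
  rw [← sum_fiberwise_of_maps_to hmaps]
  calc _ ≤ #(Icc ⌊g 0⌋ ⌊g (N - 1)⌋) • (7 / √l) :=
        (norm_sum_le_of_le _ fun j _ ↦ norm_sum_filter_floor_fourierChar_le hl hl₁
          (fun m n hmn hn ↦ (hgrow m n hmn hn).1) j).trans_eq (sum_const _)
    _ ≤ (L * N + 2) * (7 / √l) := by
        rw [nsmul_eq_mul]
        gcongr
    _ = 7 * (L * N + 2) / √l := by ring

end ExponentialSums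

/-! ### The sawtooth function -/

/-- The sawtooth function `ψ(t) = {t} - 1/2`. -/
noncomputable def sawtooth (t : ℝ) : ℝ := Int.fract t - 1 / 2

/-- The primitive of `sawtooth` that vanishes at the integers. -/
noncomputable def sawtoothPrim (t : ℝ) : ℝ := (Int.fract t ^ 2 - Int.fract t) / 2

section Sawtooth

open Real
open scoped FourierTransform fwdDiff

lemma natFloor_eq_sub_sawtooth {t : ℝ} (ht : 0 ≤ t) : (⌊t⌋₊ : ℝ) = t - sawtooth t - 1 / 2 := by
  rw [natCast_floor_eq_intCast_floor ht, sawtooth, Int.fract]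
  ring

lemma sawtoothPrim_add_sub_mem_Icc {δ : ℝ} (hδ : 0 ≤ δ) (t : ℝ) :
    sawtoothPrim (t + δ) - sawtoothPrim t ∈
      Set.Icc (δ * sawtooth (t + δ) - δ ^ 2 / 2) (δ * sawtooth t + δ ^ 2 / 2) := by
  obtain ⟨z, hz⟩ : ∃ z : ℤ, z = ⌊t + δ⌋ - ⌊t⌋ := ⟨_, rfl⟩
  have hz₀ : 0 ≤ z := by linarith [Int.floor_mono (le_add_of_nonneg_right hδ : t ≤ t + δ)]
  have hfract : Int.fract (t + δ) = Int.fract t + δ - z := by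
    rw [hz, Int.fract, Int.fract]
    push_cast
    ring
  have hz₀' : (0 : ℝ) ≤ z := by exact_mod_cast hz₀
  have hz₁ : (0 : ℝ) ≤ z * (z - 1) := by
    obtain rfl | hz₁ : z = 0 ∨ 1 ≤ z := by omega
    · simp
    · have : (1 : ℝ) ≤ z := by exact_mod_cast hz₁
      nlinarith
  have h₀ := mul_nonneg hz₀' (Int.fract_nonneg (t + δ))
  have h₁ := mul_nonneg hz₀' (sub_nonneg.2 (Int.fract_lt_one t).le)
  simp only [sawtoothPrim, sawtooth, Set.mem_Icc]
  rw [hfract] at h₀ ⊢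
  constructor <;> nlinarith

lemma hasSum_cos_sawtoothPrim (t : ℝ) :
    HasSum (fun h : ℕ ↦ 1 / (h : ℝ) ^ 2 * cos (2 * π * (h * t)))
      (2 * π ^ 2 * sawtoothPrim t + π ^ 2 / 6) := by
  convert hasSum_one_div_nat_pow_mul_cos one_ne_zero
    ⟨Int.fract_nonneg t, (Int.fract_lt_one t).le⟩ using 1
  · funext h
    rw [← cos_sub_int_mul_two_pi (2 * π * (h * t)) (h * ⌊t⌋), Int.fract]
    congr 2
    push_cast
    ring
  · have := bernoulliFun_two (Int.fract t)
    rw [bernoulliFun] at this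
    rw [mul_one, this, sawtoothPrim]
    simp
    ring

lemma hasSum_sawtoothPrim_sub (t δ : ℝ) :
    HasSum (fun h : ℕ ↦ 1 / (h : ℝ) ^ 2 * (((𝐞 (h * δ) : ℂ) - 1) * 𝐞 (h * t)).re)
      (2 * π ^ 2 * (sawtoothPrim (t + δ) - sawtoothPrim t)) := by
  have hre (u : ℝ) : (𝐞 u : ℂ).re = cos (2 * π * u) := by
    rw [fourierChar_apply, Complex.exp_ofReal_mul_I_re]
  have hterm (h : ℕ) : (((𝐞 (h * δ) : ℂ) - 1) * 𝐞 (h * t)).re =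
      cos (2 * π * (h * (t + δ))) - cos (2 * π * (h * t)) := by
    rw [sub_mul, one_mul, ← Circle.coe_mul, ← AddChar.map_add_eq_mul, ← mul_add, add_comm δ,
      Complex.sub_re, hre, hre]
  simp only [hterm, mul_sub]
  simpa only [add_sub_add_right_eq_sub] using
    (hasSum_cos_sawtoothPrim (t + δ)).sub (hasSum_cos_sawtoothPrim t)

lemma hasSum_sum_sawtoothPrim_sub {ι : Type*} (s : Finset ι) (a : ι → ℝ) (δ : ℝ) :
    HasSum (fun h : ℕ ↦ 1 / (h : ℝ) ^ 2 *
        (((𝐞 (h * δ) : ℂ) - 1) * ∑ i ∈ s, (𝐞 (h * a i) : ℂ)).re)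
      (2 * π ^ 2 * ∑ i ∈ s, (sawtoothPrim (a i + δ) - sawtoothPrim (a i))) := by
  simpa only [mul_sum, Complex.re_sum] using
    hasSum_sum fun i (_ : i ∈ s) ↦ hasSum_sawtoothPrim_sub (a i) δ

lemma norm_fourierChar_sub_one_le {t : ℝ} (ht : 0 ≤ t) :
    ‖(𝐞 t : ℂ) - 1‖ ≤ 2 * π * min 1 t := by
  rw [mul_min_of_nonneg _ _ two_pi_pos.le, le_min_iff]
  constructor
  · calc ‖(𝐞 t : ℂ) - 1‖ ≤ ‖(𝐞 t : ℂ)‖ + ‖(1 : ℂ)‖ := norm_sub_le _ _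
      _ ≤ 2 * π * 1 := by rw [Circle.norm_coe, norm_one]; linarith [pi_gt_three]
  · rw [fourierChar_apply, mul_comm _ Complex.I]
    exact norm_exp_I_mul_ofReal_sub_one_le.trans_eq (norm_of_nonneg (by positivity))

lemma min_one_mul_sq_div_le_sub {r q s : ℝ} (hr : 0 < r) (hq : 0 ≤ q) (hrq : r ^ 2 = q ^ 2 + 1)
    (hs : 0 ≤ s) :
    min 1 (s ^ 2 * r ^ 2) / (r ^ 2 * r) ≤
      8 * (s * (r * s / (1 + r * s)) - s * (q * s / (1 + q * s))) := by
  have hqr : q ≤ r := by nlinarith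
  have hsub : s * (r * s / (1 + r * s)) - s * (q * s / (1 + q * s)) =
      s ^ 2 / ((r + q) * ((1 + r * s) * (1 + q * s))) := by
    field_simp
    linear_combination s ^ 2 * hrq
  have hmin : min 1 (s ^ 2 * r ^ 2) * (1 + r * s) ^ 2 ≤ 4 * (s ^ 2 * r ^ 2) := by
    obtain ⟨x, hx⟩ : ∃ x, x = r * s := ⟨_, rfl⟩
    have hx₀ : 0 ≤ x := hx ▸ by positivity
    rw [← mul_pow, mul_comm s r, ← hx]
    rcases le_total x 1 with h | h
    · rw [min_eq_right (by nlinarith), mul_comm 4]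
      gcongr
      nlinarith
    · rw [min_eq_left (by nlinarith)]
      nlinarith
  calc min 1 (s ^ 2 * r ^ 2) / (r ^ 2 * r)
      ≤ 4 * (s ^ 2 * r ^ 2) / (1 + r * s) ^ 2 / (r ^ 2 * r) := by
        gcongr
        rwa [le_div_iff₀ (by positivity)]
    _ = 8 * (s ^ 2 / ((r + r) * ((1 + r * s) * (1 + r * s)))) := by
        field_simp
        ring
    _ ≤ 8 * (s ^ 2 / ((r + q) * ((1 + r * s) * (1 + q * s)))) := by gcongr
    _ = _ := by rw [hsub]

lemma sum_range_min_one_mul_div_le {δ : ℝ} (hδ : 0 ≤ δ) (H : ℕ) :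
    ∑ h ∈ range H, min 1 (h * δ) / (h * √h) ≤ 8 * √δ := by
  have htel (H : ℕ) : ∑ h ∈ range (H + 1), min 1 (h * δ) / (h * √h) ≤
      8 * (√δ * (√H * √δ / (1 + √H * √δ))) := by
    induction H with
    | zero => simp
    | succ H ih =>
      rw [sum_range_succ]
      have hsq : √((H + 1 : ℕ) : ℝ) ^ 2 = √(H : ℝ) ^ 2 + 1 := by
        rw [sq_sqrt (by positivity), sq_sqrt (by positivity), Nat.cast_succ]
      have hterm := min_one_mul_sq_div_le_sub (sqrt_pos.2 (by positivity)) (sqrt_nonneg _) hsq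
        (sqrt_nonneg δ)
      rw [sq_sqrt hδ, sq_sqrt (by positivity), mul_comm δ] at hterm
      linarith
  refine (sum_le_sum_of_subset_of_nonneg (range_subset_range.2 H.le_succ)
    fun h _ _ ↦ by positivity).trans ((htel H).trans ?_)
  have : √H * √δ / (1 + √H * √δ) ≤ 1 := div_le_one_of_le₀ (by linarith) (by positivity)
  nlinarith [sqrt_nonneg δ]

section VanDerCorput

variable {ι : Type*} {s : Finset ι} {a : ι → ℝ} {P Q δ : ℝ}

lemma abs_sum_sawtoothPrim_sub_le (hP : 0 ≤ P) (hQ : 0 ≤ Q) (hδ : 0 ≤ δ)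
    (h : ∀ h : ℕ, 0 < h → ‖∑ i ∈ s, (𝐞 (h * a i) : ℂ)‖ ≤ P * √h + Q / √h) :
    |∑ i ∈ s, (sawtoothPrim (a i + δ) - sawtoothPrim (a i))| ≤ 3 * (P * √δ + Q * δ) := by
  have hterm (n : ℕ) : |1 / (n : ℝ) ^ 2 *
      (((𝐞 (n * δ) : ℂ) - 1) * ∑ i ∈ s, (𝐞 (n * a i) : ℂ)).re| ≤
      2 * π * (P * (min 1 (n * δ) / (n * √n)) + Q * δ * (min 1 ((n : ℝ) * 1) / (n * √n))) := by
    obtain rfl | hn := Nat.eq_zero_or_pos n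
    · simp
    have hn₁ : (1 : ℝ) ≤ n := by exact_mod_cast hn
    rw [abs_mul, abs_of_nonneg (by positivity), mul_one, min_eq_left hn₁]
    calc _ ≤ 1 / (n : ℝ) ^ 2 * (2 * π * min 1 (n * δ) * (P * √n + Q / √n)) := by
          gcongr
          refine (Complex.abs_re_le_norm _).trans ?_
          rw [norm_mul]
          gcongr
          exacts [norm_fourierChar_sub_one_le (by positivity), h n hn]
      _ = 2 * π * (P * (min 1 (n * δ) / (n * √n)) + Q * (min 1 (n * δ) / (n ^ 2 * √n))) := by
          have hsq : (n : ℝ) = √n ^ 2 := (sq_sqrt (by positivity)).symm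
          have : 0 < √(n : ℝ) := sqrt_pos.2 (by positivity)
          field_simp
          rw [← hsq]
          ring
      _ ≤ 2 * π * (P * (min 1 (n * δ) / (n * √n)) + Q * ((n * δ) / (n ^ 2 * √n))) := by
          gcongr
          exact min_le_right _ _
      _ = _ := by field_simp
  have hbound : |2 * π ^ 2 * ∑ i ∈ s, (sawtoothPrim (a i + δ) - sawtoothPrim (a i))| ≤
      2 * π * (P * (8 * √δ) + Q * δ * (8 * √1)) := by
    refine le_of_tendsto' (hasSum_sum_sawtoothPrim_sub s a δ).tendsto_sum_nat.abs fun H ↦ ?_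
    refine (abs_sum_le_sum_abs _ _).trans ((sum_le_sum fun n _ ↦ hterm n).trans ?_)
    rw [← mul_sum, sum_add_distrib, ← mul_sum, ← mul_sum]
    gcongr
    exacts [sum_range_min_one_mul_div_le hδ H, sum_range_min_one_mul_div_le zero_le_one H]
  rw [abs_mul, abs_of_pos (by positivity), sqrt_one, mul_one] at hbound
  have : 0 ≤ P * √δ + Q * δ := by positivity
  have hπ := pi_gt_three
  refine le_of_mul_le_mul_left (hbound.trans ?_) (by positivity : 0 < 2 * π ^ 2)
  nlinarith [mul_nonneg (mul_nonneg pi_pos.le (sub_nonneg.2 hπ.le)) this]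

lemma abs_sum_sawtooth_le (hP : 0 ≤ P) (hQ : 0 ≤ Q) (hδ : 0 < δ)
    (h : ∀ h : ℕ, 0 < h → ‖∑ i ∈ s, (𝐞 (h * a i) : ℂ)‖ ≤ P * √h + Q / √h) :
    |∑ i ∈ s, sawtooth (a i)| ≤ #s * δ + 3 * (P / √δ + Q) := by
  have hshift : ∀ h : ℕ, 0 < h → ‖∑ i ∈ s, (𝐞 (h * (a i - δ)) : ℂ)‖ ≤ P * √h + Q / √h := by
    intro n hn
    have (i : ι) : (𝐞 (n * (a i - δ)) : ℂ) = 𝐞 (-(n * δ)) * 𝐞 (n * a i) := by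
      rw [← Circle.coe_mul, ← AddChar.map_add_eq_mul]
      ring_nf
    simpa only [this, ← mul_sum, norm_mul, Circle.norm_coe, one_mul] using h n hn
  have hupper : δ * ∑ i ∈ s, sawtooth (a i) ≤
      ∑ i ∈ s, (sawtoothPrim (a i - δ + δ) - sawtoothPrim (a i - δ)) + #s * (δ ^ 2 / 2) := by
    rw [mul_sum, ← nsmul_eq_mul, ← sum_const, ← sum_add_distrib]
    gcongr with i
    have := (sawtoothPrim_add_sub_mem_Icc hδ.le (a i - δ)).1
    rw [sub_add_cancel] at this ⊢
    linarith
  have hlower : ∑ i ∈ s, (sawtoothPrim (a i + δ) - sawtoothPrim (a i)) - #s * (δ ^ 2 / 2) ≤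
      δ * ∑ i ∈ s, sawtooth (a i) := by
    rw [mul_sum, ← nsmul_eq_mul, ← sum_const, ← sum_sub_distrib]
    gcongr with i
    linarith [(sawtoothPrim_add_sub_mem_Icc hδ.le (a i)).2]
  have hup := (abs_le.1 (abs_sum_sawtoothPrim_sub_le hP hQ hδ.le hshift)).2
  have hlow := (abs_le.1 (abs_sum_sawtoothPrim_sub_le hP hQ hδ.le h)).1
  have hcard : 0 ≤ (#s : ℝ) * (δ ^ 2 / 2) := by positivity
  rw [← mul_le_mul_iff_right₀ hδ, ← abs_of_pos hδ, ← abs_mul, abs_of_pos hδ]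
  calc |δ * ∑ i ∈ s, sawtooth (a i)| ≤ 3 * (P * √δ + Q * δ) + 2 * (#s * (δ ^ 2 / 2)) :=
        abs_le.2 ⟨by linarith, by linarith⟩
    _ = δ * (#s * δ + 3 * (P / √δ + Q)) := by
        have : P / √δ * δ = P * √δ := by rw [div_mul_eq_mul_div, mul_div_assoc, div_sqrt]
        linear_combination (-3) * this

end VanDerCorput

-- The smoothing parameter `δ = l ^ (1 / 3)` balances the two terms of `abs_sum_sawtooth_le`.
lemma abs_sum_range_sawtooth_le_of_second_fwdDiff {l α : ℝ} (hl : 0 < l) (hα : 0 ≤ α) {a : ℕ → ℝ}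
    {N : ℕ} (h : ∀ n < N, Δ_[1] (Δ_[1] a) n ∈ Set.Icc l (α * l)) :
    |∑ n ∈ range N, sawtooth (a n)| ≤ (21 * α + 1) * N * l ^ ((1 : ℝ) / 3) + 42 / √l := by
  have hsum : ∀ h : ℕ, 0 < h →
      ‖∑ n ∈ range N, (𝐞 (h * a n) : ℂ)‖ ≤ 7 * α * N * √l * √h + 14 / √l / √h := by
    intro k hk
    have hk : (0 : ℝ) < k := by exact_mod_cast hk
    have hmem : ∀ n < N, Δ_[1] (Δ_[1] fun n ↦ k * a n) n ∈ Set.Icc (k * l) (k * (α * l)) := by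
      intro n hn
      have : Δ_[1] (Δ_[1] fun n ↦ k * a n) n = k * Δ_[1] (Δ_[1] a) n := by
        simp only [fwdDiff]
        ring
      rw [this]
      exact ⟨by gcongr; exact (h n hn).1, by gcongr; exact (h n hn).2⟩
    refine (norm_sum_range_fourierChar_le_of_second_fwdDiff (by positivity) hmem).trans_eq ?_
    rw [sqrt_mul hk.le]
    have hsl := sq_sqrt hl.le
    have hsk := sq_sqrt hk.le
    have : 0 < √l := sqrt_pos.2 hl
    have : 0 < √(k : ℝ) := sqrt_pos.2 hk
    field_simp
    rw [hsl, hsk]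
    ring
  refine (abs_sum_sawtooth_le (δ := l ^ ((1 : ℝ) / 3)) (by positivity) (by positivity)
    (by positivity) hsum).trans_eq ?_
  have hpow : √l / √(l ^ ((1 : ℝ) / 3)) = l ^ ((1 : ℝ) / 3) := by
    rw [sqrt_eq_rpow, sqrt_eq_rpow, ← rpow_mul hl.le, ← rpow_sub hl]
    norm_num
  rw [card_range, mul_div_assoc, hpow]
  ring

end Sawtooth

/-! ### Sawtooth sums over hyperbolas -/

section Hyperbola

open Real
open scoped fwdDiff

variable {A b : ℝ} {K N : ℕ}

lemma second_fwdDiff_div_mem_Icc (hA : 0 ≤ A) (hb : b ∈ Set.Icc 0 1) (c : ℝ) {n : ℕ}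
    (hn : n < K) :
    Δ_[1] (Δ_[1] fun i : ℕ ↦ A / ((K + i : ℕ) + b) + c) n ∈
      Set.Icc (A / (12 * K ^ 3)) (24 * (A / (12 * K ^ 3))) := by
  obtain ⟨hb₀, hb₁⟩ := hb
  have hK : (0 : ℝ) < K := by exact_mod_cast (by omega : 0 < K)
  have hnK : (n : ℝ) + 1 ≤ K := by exact_mod_cast hn
  have : (0 : ℝ) ≤ n := n.cast_nonneg
  obtain ⟨u, hu⟩ : ∃ u, u = K + n + b := ⟨_, rfl⟩
  have huK : K ≤ u := by linarith
  have hu₀ : 0 < u := by linarith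
  have hdiff : Δ_[1] (Δ_[1] fun i : ℕ ↦ A / ((K + i : ℕ) + b) + c) n =
      2 * A / (u * (u + 1) * (u + 2)) := by
    have h₀ : ((K + n : ℕ) : ℝ) + b = u := by push_cast; linarith
    have h₁ : ((K + (n + 1) : ℕ) : ℝ) + b = u + 1 := by push_cast; linarith
    have h₂ : ((K + (n + 1 + 1) : ℕ) : ℝ) + b = u + 2 := by push_cast; linarith
    simp only [fwdDiff, h₀, h₁, h₂]
    field_simp
    ring
  rw [hdiff]
  constructor
  · calc A / (12 * K ^ 3) = 2 * A / (2 * K * (3 * K) * (4 * K)) := by field_simp; ring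
      _ ≤ 2 * A / (u * (u + 1) * (u + 2)) := by gcongr <;> linarith
  · calc 2 * A / (u * (u + 1) * (u + 2)) ≤ 2 * A / (K * K * K) := by gcongr <;> linarith
      _ = 24 * (A / (12 * K ^ 3)) := by field_simp; ring

lemma abs_sum_sawtooth_div_block_le (hK : 0 < K) (hKA : (K : ℝ) ^ 2 ≤ A) (hN : N ≤ K)
    (hb : b ∈ Set.Icc 0 1) (c : ℝ) :
    |∑ n ∈ range N, sawtooth (A / ((K + n : ℕ) + b) + c)| ≤ 700 * A ^ ((1 : ℝ) / 3) := by
  have hK₁ : (1 : ℝ) ≤ K := by exact_mod_cast hK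
  have hNK : (N : ℝ) ≤ K := by exact_mod_cast hN
  have hA : 1 ≤ A := by nlinarith
  set B := A ^ ((1 : ℝ) / 3)
  have hB : 1 ≤ B := one_le_rpow hA (by norm_num)
  have hBA : B ^ 3 = A := by
    rw [← rpow_mul_natCast (by positivity)]
    norm_num
  set l := A / (12 * K ^ 3)
  have hl : 0 < l := by positivity
  have hmain : N * l ^ ((1 : ℝ) / 3) ≤ B := by
    have hlB : l ≤ (B / K) ^ 3 := by
      rw [div_pow, hBA]
      exact div_le_div_of_nonneg_left (by positivity) (by positivity)
        (le_mul_of_one_le_left (by positivity) (by norm_num))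
    calc N * l ^ ((1 : ℝ) / 3) ≤ K * ((B / K) ^ 3) ^ ((1 : ℝ) / 3) := by gcongr
      _ = K * (B / K) := by
        rw [← rpow_natCast, ← rpow_mul (by positivity)]
        norm_num
      _ = B := by field_simp
  have hrest : 1 / √l ≤ 4 * B := by
    have hKB : (K : ℝ) ^ 3 ≤ B ^ 5 := by
      refine le_of_sq_le_sq ?_ (by positivity)
      calc ((K : ℝ) ^ 3) ^ 2 = (K ^ 2) ^ 3 := by ring
        _ ≤ (B ^ 3) ^ 3 := by rw [hBA]; gcongr
        _ ≤ (B ^ 3) ^ 3 * B := le_mul_of_one_le_right (by positivity) hB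
        _ = (B ^ 5) ^ 2 := by ring
    rw [div_le_iff₀ (sqrt_pos.2 hl), ← abs_of_pos (by positivity : 0 < 4 * B), ← sqrt_sq_eq_abs,
      ← sqrt_mul (by positivity), one_le_sqrt, ← mul_div_assoc, le_div_iff₀ (by positivity), ← hBA]
    nlinarith
  have := abs_sum_range_sawtooth_le_of_second_fwdDiff hl (by norm_num : (0 : ℝ) ≤ 24)
    fun n hn ↦ second_fwdDiff_div_mem_Icc (by positivity) hb c (hn.trans_le hN)
  calc _ ≤ 505 * (N * l ^ ((1 : ℝ) / 3)) + 42 * (1 / √l) := this.trans_eq (by ring)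
    _ ≤ 700 * B := by linarith

lemma abs_sum_Icc_sawtooth_div_le_natLog (hNA : (N : ℝ) ^ 2 ≤ A) (hb : b ∈ Set.Icc 0 1) (c : ℝ) :
    |∑ n ∈ Icc 1 N, sawtooth (A / (n + b) + c)| ≤
      700 * A ^ ((1 : ℝ) / 3) * Nat.log 2 (2 * N) := by
  have hA : 0 ≤ A := (sq_nonneg _).trans hNA
  induction N using Nat.strong_induction_on with
  | _ N ih =>
    obtain rfl | hN := Nat.eq_zero_or_pos N
    · simp
    have hsplit : ∑ n ∈ Icc 1 N, sawtooth (A / (n + b) + c) =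
        ∑ n ∈ Icc 1 (N / 2), sawtooth (A / (n + b) + c) +
        ∑ n ∈ range (N - N / 2), sawtooth (A / ((N / 2 + 1 + n : ℕ) + b) + c) := by
      simp only [← Ico_add_one_right_eq_Icc]
      rw [← sum_Ico_consecutive _ (by omega : 1 ≤ N / 2 + 1) (by omega : N / 2 + 1 ≤ N + 1),
        sum_Ico_eq_sum_range _ (N / 2 + 1), Nat.add_sub_add_right]
    have hmono {m : ℕ} (hm : m ≤ N) : (m : ℝ) ^ 2 ≤ A :=
      (by gcongr : (m : ℝ) ^ 2 ≤ (N : ℝ) ^ 2).trans hNA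
    have hlow := ih (N / 2) (by omega) (hmono (by omega))
    have hhigh := abs_sum_sawtooth_div_block_le (Nat.succ_pos (N / 2)) (hmono (by omega))
      (by omega : N - N / 2 ≤ N / 2 + 1) hb c
    have hlog : (Nat.log 2 (2 * (N / 2)) : ℝ) + 1 ≤ Nat.log 2 (2 * N) := by
      rw [Nat.log_of_one_lt_of_le one_lt_two (by omega : 2 ≤ 2 * N)]
      push_cast
      gcongr
      omega
    calc _ ≤ 700 * A ^ ((1 : ℝ) / 3) * Nat.log 2 (2 * (N / 2)) + 700 * A ^ ((1 : ℝ) / 3) := by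
          rw [hsplit]
          exact (abs_add_le _ _).trans (add_le_add hlow hhigh)
      _ = 700 * A ^ ((1 : ℝ) / 3) * (Nat.log 2 (2 * (N / 2)) + 1) := by ring
      _ ≤ _ := by gcongr

lemma abs_sum_Icc_sawtooth_div_le (hA : 1 ≤ A) (hNA : (N : ℝ) ^ 2 ≤ A) (hb : b ∈ Set.Icc 0 1)
    (c : ℝ) :
    |∑ n ∈ Icc 1 N, sawtooth (A / (n + b) + c)| ≤ 700 * (A ^ ((1 : ℝ) / 3) * (1 + log A)) := by
  refine (abs_sum_Icc_sawtooth_div_le_natLog hNA hb c).trans ?_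
  rw [mul_assoc]
  gcongr
  obtain rfl | hN := Nat.eq_zero_or_pos N
  · simpa using add_nonneg zero_le_one (log_nonneg hA)
  have hlog₂ : 1 / 2 ≤ log 2 := by linarith [log_two_gt_d9]
  have : 0 ≤ log N := log_natCast_nonneg N
  rw [mul_comm 2, Nat.log_mul_base one_lt_two hN.ne', Nat.cast_succ, add_comm]
  gcongr
  calc (Nat.log 2 N : ℝ) ≤ log N / log 2 := natLog_le_logb N 2
    _ ≤ log N / (1 / 2) := by gcongr
    _ = log ((N : ℝ) ^ 2) := by
      rw [log_pow]
      push_cast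
      ring
    _ ≤ log A := by gcongr

end Hyperbola

/-! ### Divisibility of integer parts -/

/-- The number of `n ≤ y` for which `d` divides `⌊y / n⌋`. -/
def floorDivCount (d y : ℕ) : ℕ := #{n ∈ Icc 1 y | d ∣ y / n}

/-- The asymptotic density `∑_{k ≥ 1} 1 / (dk (dk + 1))` of the `n ≤ x` for which `d` divides
`⌊x / n⌋`; the term `k = 0` vanishes because of division by zero. -/
noncomputable def floorDivDensity (d : ℕ) : ℝ := ∑' k : ℕ, 1 / ((d * k : ℝ) * (d * k + 1))

section FloorDiv

open Real

variable {d : ℕ}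

lemma filter_dvd_div_sdiff {y k : ℕ} (hd : 0 < d) (hk : 0 < k) :
    {n ∈ Icc 1 (y / (d * k)) | d ∣ y / n} \ {n ∈ Icc 1 (y / (d * (k + 1))) | d ∣ y / n} =
      Ioc (y / (d * k + 1)) (y / (d * k)) := by
  ext n
  obtain rfl | hn := Nat.eq_zero_or_pos n
  · simp
  have hswap {m : ℕ} (hm : 0 < m) : n ≤ y / m ↔ m ≤ y / n := by
    rw [Nat.le_div_iff_mul_le hm, Nat.le_div_iff_mul_le hn, mul_comm]
  simp only [Finset.mem_sdiff, mem_filter, mem_Icc, mem_Ioc, ← not_le, hswap (Nat.mul_pos hd hk),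
    hswap (Nat.mul_pos hd k.succ_pos), hswap (Nat.succ_pos (d * k))]
  constructor
  · rintro ⟨⟨⟨-, hle⟩, m, hm⟩, hlt⟩
    rw [hm] at hle hlt ⊢
    have hkm := Nat.le_of_mul_le_mul_left hle hd
    have hmk : m < k + 1 := by
      by_contra! h
      exact hlt ⟨⟨hn, Nat.mul_le_mul_left d h⟩, dvd_mul_right d m⟩
    obtain rfl : m = k := by omega
    omega
  · rintro ⟨hlt, hle⟩
    have hq : y / n = d * k := by omega
    rw [hq]
    exact ⟨⟨⟨hn, le_rfl⟩, dvd_mul_right d k⟩, fun h ↦ by nlinarith [h.1.2]⟩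

lemma floorDivCount_eq_card_filter {y : ℕ} (hd : 0 < d) :
    floorDivCount d y = #{n ∈ Icc 1 (y / d) | d ∣ y / n} := by
  refine congrArg card (ext fun n ↦ ?_)
  simp only [mem_filter, mem_Icc]
  refine ⟨fun ⟨⟨hn, hny⟩, hdvd⟩ ↦ ⟨⟨hn, ?_⟩, hdvd⟩, fun ⟨⟨hn, hny⟩, hdvd⟩ ↦
    ⟨⟨hn, hny.trans (Nat.div_le_self _ _)⟩, hdvd⟩⟩
  have := Nat.le_of_dvd (Nat.div_pos hny hn) hdvd
  rw [Nat.le_div_iff_mul_le hn] at this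
  rwa [Nat.le_div_iff_mul_le hd, mul_comm]

-- The hyperbola method: `⌊y / n⌋ = dk` means `y / (dk + 1) < n ≤ y / (dk)`, which counts the
-- quotients `dk ≤ dK`; larger quotients occur only for `n ≤ y / (d (K + 1))`.
lemma floorDivCount_add_sum_div (hd : 0 < d) (y K : ℕ) :
    floorDivCount d y + ∑ k ∈ Icc 1 K, y / (d * k + 1) =
      ∑ k ∈ Icc 1 K, y / (d * k) + #{n ∈ Icc 1 (y / (d * (K + 1))) | d ∣ y / n} := by
  induction K with
  | zero => simp [floorDivCount_eq_card_filter hd]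
  | succ K ih =>
    have hsub : {n ∈ Icc 1 (y / (d * (K + 1 + 1))) | d ∣ y / n} ⊆
        {n ∈ Icc 1 (y / (d * (K + 1))) | d ∣ y / n} :=
      filter_subset_filter _ (Icc_subset_Icc_right (by gcongr; omega))
    have hcard := card_sdiff_add_card_eq_card hsub
    rw [filter_dvd_div_sdiff hd K.add_one_pos, Nat.card_Ioc] at hcard
    have hle : y / (d * (K + 1) + 1) ≤ y / (d * (K + 1)) := by gcongr; omega
    rw [sum_Icc_succ_top (by omega), sum_Icc_succ_top (by omega)]
    omega

lemma card_filter_dvd_add_sum_sub_one_div {ι : Type*} {s : Finset ι} {f : ι → ℕ}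
    (hf : ∀ i ∈ s, 0 < f i) :
    #{i ∈ s | d ∣ f i} + ∑ i ∈ s, (f i - 1) / d = ∑ i ∈ s, f i / d := by
  rw [card_filter, ← sum_add_distrib]
  refine sum_congr rfl fun i hi ↦ ?_
  obtain ⟨m, hm⟩ := Nat.exists_eq_add_one.2 (hf i hi)
  rw [hm, Nat.succ_div, Nat.add_sub_cancel, add_comm]

lemma abs_sum_natFloor_div_sub_natFloor_le {X b c : ℝ} {N : ℕ} (hX : 1 ≤ X)
    (hNX : (N : ℝ) ^ 2 ≤ X) (hb : b ∈ Set.Icc 0 1) (hc : ∀ n ∈ Icc 1 N, c ≤ X / (n + b)) :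
    |∑ n ∈ Icc 1 N, ((⌊X / n⌋₊ : ℝ) - ⌊X / (n + b) - c⌋₊ - (X / n - (X / (n + b) - c)))| ≤
      1400 * (X ^ ((1 : ℝ) / 3) * (1 + log X)) := by
  have hterm : ∀ n ∈ Icc 1 N, (⌊X / n⌋₊ : ℝ) - ⌊X / (n + b) - c⌋₊ - (X / n - (X / (n + b) - c)) =
      sawtooth (X / (n + b) + -c) - sawtooth (X / (n + 0) + 0) := by
    intro n hn
    rw [natFloor_eq_sub_sawtooth (by positivity), natFloor_eq_sub_sawtooth (sub_nonneg.2 (hc n hn)),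
      add_zero, add_zero, ← sub_eq_add_neg]
    ring
  rw [sum_congr rfl hterm, sum_sub_distrib]
  have h₁ := abs_sum_Icc_sawtooth_div_le hX hNX hb (-c)
  have h₂ := abs_sum_Icc_sawtooth_div_le hX hNX (Set.left_mem_Icc.2 zero_le_one) 0
  exact (abs_sub _ _).trans (by linarith)

lemma hasSum_one_div_sub_one_div_add_one {c : ℝ} (hc : 0 < c) :
    HasSum (fun j : ℕ ↦ 1 / (j + c) - 1 / (j + c + 1)) (1 / c) := by
  rw [hasSum_iff_tendsto_nat_of_nonneg
    fun j ↦ sub_nonneg.2 (one_div_le_one_div_of_le (by positivity) (by linarith))]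
  have hsum (n : ℕ) : ∑ j ∈ range n, (1 / (j + c) - 1 / (j + c + 1)) = 1 / c - 1 / (n + c) := by
    have := sum_range_sub' (fun j : ℕ ↦ 1 / ((j : ℝ) + c)) n
    simpa [add_right_comm] using this
  simp only [hsum]
  have : Tendsto (fun n : ℕ ↦ 1 / ((n : ℝ) + c)) atTop (nhds 0) := by
    simpa only [one_div, Function.comp_def] using tendsto_inv_atTop_zero.comp
      (tendsto_atTop_add_const_right _ c tendsto_natCast_atTop_atTop)
  simpa using tendsto_const_nhds.sub this

lemma one_div_mul_add_one_mem_Icc {u : ℝ} (hd : 0 < d) (hu : 0 < u) :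
    1 / ((d * (u + 1)) * (d * (u + 1) + 1)) ∈
      Set.Icc (1 / (d : ℝ) ^ 2 * (1 / (u + 1) - 1 / (u + 1 + 1)))
        (1 / (d : ℝ) ^ 2 * (1 / u - 1 / (u + 1))) := by
  have hd : (1 : ℝ) ≤ d := by exact_mod_cast hd
  constructor
  · calc 1 / (d : ℝ) ^ 2 * (1 / (u + 1) - 1 / (u + 1 + 1)) =
          1 / ((d * (u + 1)) * (d * (u + 1) + d)) := by field_simp; ring
      _ ≤ _ := by gcongr
  · calc 1 / ((d * (u + 1)) * (d * (u + 1) + 1)) ≤ 1 / ((d * (u + 1)) * (d * u)) := by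
          gcongr
          nlinarith
      _ = _ := by field_simp; ring

lemma summable_floorDivDensity (hd : 0 < d) :
    Summable fun k : ℕ ↦ 1 / ((d * k : ℝ) * (d * k + 1)) := by
  rw [← summable_nat_add_iff 2]
  refine Summable.of_nonneg_of_le (fun j ↦ by positivity) (fun j ↦ ?_)
    ((hasSum_one_div_sub_one_div_add_one one_pos).summable.mul_left (1 / (d : ℝ) ^ 2))
  have hcast : ((j + 2 : ℕ) : ℝ) = j + 1 + 1 := by push_cast; ring
  rw [hcast]
  exact (one_div_mul_add_one_mem_Icc hd (by positivity)).2

lemma floorDivDensity_sub_sum_mem_Icc {K : ℕ} (hd : 0 < d) (hK : 0 < K) :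
    floorDivDensity d - ∑ k ∈ Icc 1 K, 1 / ((d * k : ℝ) * (d * k + 1)) ∈
      Set.Icc (1 / (d : ℝ) ^ 2 * (1 / (K + 1))) (1 / (d : ℝ) ^ 2 * (1 / K)) := by
  have hK : (0 : ℝ) < K := by exact_mod_cast hK
  have hsummable := summable_floorDivDensity hd
  have hIcc : ∑ k ∈ Icc 1 K, 1 / ((d * k : ℝ) * (d * k + 1)) =
      ∑ k ∈ range (K + 1), 1 / ((d * k : ℝ) * (d * k + 1)) := by
    rw [range_eq_Ico, sum_eq_sum_Ico_succ_bot K.add_one_pos, Ico_add_one_right_eq_Icc]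
    simp
  rw [hIcc, floorDivDensity, ← hsummable.sum_add_tsum_nat_add (K + 1), add_sub_cancel_left]
  have htail := ((summable_nat_add_iff (K + 1)).2 hsummable).hasSum
  have hterm (j : ℕ) := one_div_mul_add_one_mem_Icc hd (by positivity : (0 : ℝ) < j + K)
  have hcast (j : ℕ) : ((j + (K + 1) : ℕ) : ℝ) = j + K + 1 := by push_cast; ring
  simp only [hcast] at htail ⊢
  constructor
  · refine hasSum_le (fun j ↦ ?_) ((hasSum_one_div_sub_one_div_add_one
      (by positivity : (0 : ℝ) < K + 1)).mul_left (1 / (d : ℝ) ^ 2)) htail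
    simpa only [← add_assoc] using (hterm j).1
  · exact hasSum_le (fun j ↦ (hterm j).2) htail
      ((hasSum_one_div_sub_one_div_add_one hK).mul_left (1 / (d : ℝ) ^ 2))

lemma floorDivDensity_nonneg (d : ℕ) : 0 ≤ floorDivDensity d :=
  tsum_nonneg fun k ↦ by positivity

lemma floorDivDensity_le (hd : 0 < d) : floorDivDensity d ≤ 2 / (d : ℝ) ^ 2 := by
  have htail := (floorDivDensity_sub_sum_mem_Icc hd one_pos).2
  have hd : (1 : ℝ) ≤ d := by exact_mod_cast hd
  have hfirst : 1 / ((d : ℝ) * (d + 1)) ≤ 1 / (d : ℝ) ^ 2 :=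
    one_div_le_one_div_of_le (by positivity) (by nlinarith)
  simp only [Icc_self, sum_singleton, Nat.cast_one, mul_one, div_one] at htail
  calc _ ≤ 1 / (d : ℝ) ^ 2 + 1 / (d : ℝ) ^ 2 := by linarith
    _ = 2 / (d : ℝ) ^ 2 := by ring

lemma floorDivCount_floor_eq (hd : 0 < d) (x : ℝ) (K : ℕ) :
    (floorDivCount d ⌊x⌋₊ : ℝ) =
      ∑ k ∈ Icc 1 K, ((⌊x / d / k⌋₊ : ℝ) - ⌊x / d / (k + 1 / d)⌋₊) +
      ∑ n ∈ Icc 1 (⌊x⌋₊ / (d * (K + 1))), ((⌊x / d / n⌋₊ : ℝ) - ⌊x / d / n - 1 / d⌋₊) := by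
  have : (0 : ℝ) < d := by exact_mod_cast hd
  have hmul (k : ℕ) : ⌊x / d / k⌋₊ = ⌊x⌋₊ / (d * k) := by
    rw [← Nat.floor_div_natCast, Nat.cast_mul, div_div]
  have hadd (k : ℕ) : ⌊x / d / (k + 1 / d)⌋₊ = ⌊x⌋₊ / (d * k + 1) := by
    rw [← Nat.floor_div_natCast, div_div]
    congr 2
    push_cast
    field_simp
  have hdiv (n : ℕ) : ⌊x / d / n⌋₊ = ⌊x⌋₊ / n / d := by
    rw [hmul, Nat.div_div_eq_div_mul, mul_comm]
  have hsub (n : ℕ) : ⌊x / d / n - 1 / d⌋₊ = (⌊x⌋₊ / n - 1) / d := by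
    rw [← Nat.floor_div_natCast, ← Nat.floor_sub_one, ← Nat.floor_div_natCast]
    congr 1
    ring
  have hpos : ∀ n ∈ Icc 1 (⌊x⌋₊ / (d * (K + 1))), 0 < ⌊x⌋₊ / n := fun n hn ↦
    have hn := mem_Icc.1 hn
    Nat.div_pos (hn.2.trans (Nat.div_le_self _ _)) hn.1
  have hhyp := congrArg (Nat.cast : ℕ → ℝ) (floorDivCount_add_sum_div hd ⌊x⌋₊ K)
  have hcard := congrArg (Nat.cast : ℕ → ℝ) (card_filter_dvd_add_sum_sub_one_div (d := d) hpos)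
  simp only [sum_sub_distrib, hadd, hsub]
  simp only [hmul, ← hdiv, Nat.cast_add, Nat.cast_sum] at hhyp hcard ⊢
  linarith

lemma main_terms_mem_Icc {x : ℝ} (hd : 0 < d) (hx : d ≤ x) :
    x * floorDivDensity d - x * ∑ k ∈ Icc 1 ⌊√(x / d)⌋₊, 1 / ((d * k : ℝ) * (d * k + 1)) -
      (⌊x⌋₊ / (d * (⌊√(x / d)⌋₊ + 1)) : ℕ) / d ∈ Set.Icc 0 3 := by
  have hX : 1 ≤ x / d := (one_le_div₀ (by exact_mod_cast hd)).2 hx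
  have hd₁ : (1 : ℝ) ≤ d := by exact_mod_cast hd
  have hx₀ : 0 < x := by linarith
  set K := ⌊√(x / d)⌋₊
  have hK : 0 < K := Nat.floor_pos.2 (one_le_sqrt.2 hX)
  have hK₁ : (1 : ℝ) ≤ K := by exact_mod_cast hK
  have hXK : x / d < (K + 1) ^ 2 :=
    (sqrt_lt' (by positivity)).1 (Nat.lt_floor_add_one _)
  have hN : ((⌊x⌋₊ / (d * (K + 1)) : ℕ) : ℝ) = ⌊x / d / (K + 1)⌋₊ := by
    rw [← Nat.floor_div_natCast, div_div]
    push_cast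
    rfl
  have hle := Nat.floor_le (by positivity : 0 ≤ x / d / (K + 1))
  have hlt := Nat.lt_floor_add_one (x / d / (K + 1))
  obtain ⟨hlow, hup⟩ := floorDivDensity_sub_sum_mem_Icc hd hK
  rw [hN, ← mul_sub]
  constructor
  · calc 0 ≤ (x / d / (K + 1) - ⌊x / d / (K + 1)⌋₊) / d :=
          div_nonneg (sub_nonneg.2 hle) d.cast_nonneg
      _ = x * (1 / d ^ 2 * (1 / (K + 1))) - ⌊x / d / (K + 1)⌋₊ / d := by field_simp
      _ ≤ _ := by gcongr
  · calc _ ≤ x * (1 / d ^ 2 * (1 / K)) - (x / d / (K + 1) - 1) / d := by gcongr; linarith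
      _ = (x / d / (K * (K + 1)) + 1) / d := by field_simp; ring
      _ ≤ (2 + 1) / 1 := by
        gcongr
        rw [div_le_iff₀ (by positivity)]
        nlinarith
      _ = 3 := by norm_num

lemma sq_natFloor_div_le {x : ℝ} (hx : 0 ≤ x) (d : ℕ) :
    ((⌊x⌋₊ / (d * (⌊√(x / d)⌋₊ + 1)) : ℕ) : ℝ) ^ 2 ≤ x / d := by
  have hmul : ((⌊x⌋₊ / (d * (⌊√(x / d)⌋₊ + 1)) : ℕ) : ℝ) * (⌊√(x / d)⌋₊ + 1) ≤ x / d := by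
    rw [← le_div_iff₀ (by positivity), div_div]
    simpa [← Nat.floor_div_natCast] using
      Nat.floor_le (by positivity : 0 ≤ x / (d * (⌊√(x / d)⌋₊ + 1)))
  refine (le_sqrt (by positivity) (by positivity)).1 (le_of_mul_le_mul_right ?_
    (by positivity : (0 : ℝ) < ⌊√(x / d)⌋₊ + 1))
  calc _ ≤ √(x / d) * √(x / d) := hmul.trans_eq (mul_self_sqrt (by positivity)).symm
    _ ≤ √(x / d) * (⌊√(x / d)⌋₊ + 1) := by gcongr; exact (Nat.lt_floor_add_one _).le

lemma abs_floorDivCount_sub_main_terms_le {x : ℝ} (hd : 0 < d) (hx : d ≤ x) :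
    |floorDivCount d ⌊x⌋₊ - (x * ∑ k ∈ Icc 1 ⌊√(x / d)⌋₊, 1 / ((d * k : ℝ) * (d * k + 1)) +
        (⌊x⌋₊ / (d * (⌊√(x / d)⌋₊ + 1)) : ℕ) / d)| ≤
      2800 * ((x / d) ^ ((1 : ℝ) / 3) * (1 + log (x / d))) := by
  have hX : 1 ≤ x / d := (one_le_div₀ (by exact_mod_cast hd)).2 hx
  have hd₁ : (1 : ℝ) ≤ d := by exact_mod_cast hd
  have hx₀ : 0 < x := by linarith
  have heq := floorDivCount_floor_eq hd x ⌊√(x / d)⌋₊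
  have hNX := sq_natFloor_div_le hx₀.le d
  set X := x / d with hX_def
  set K := ⌊√X⌋₊
  set N := ⌊x⌋₊ / (d * (K + 1))
  have hKX : (K : ℝ) ^ 2 ≤ X :=
    (le_sqrt (by positivity) (by positivity)).1 (Nat.floor_le (sqrt_nonneg _))
  have hinv : 1 / (d : ℝ) ∈ Set.Icc 0 1 := ⟨by positivity, div_le_one_of_le₀ hd₁ (by positivity)⟩
  have hshift : ∀ n ∈ Icc 1 N, 1 / (d : ℝ) ≤ X / (n + 0) := by
    intro n hn
    obtain ⟨hn₁, hnN⟩ := mem_Icc.1 hn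
    have hn₁ : (1 : ℝ) ≤ n := by exact_mod_cast hn₁
    have hnN : (n : ℝ) ≤ N := by exact_mod_cast hnN
    rw [add_zero]
    exact hinv.2.trans ((one_le_div₀ (by positivity)).2 (by nlinarith))
  have hk := abs_sum_natFloor_div_sub_natFloor_le (c := 0) hX hKX hinv fun n _ ↦ by positivity
  have hn := abs_sum_natFloor_div_sub_natFloor_le hX hNX (Set.left_mem_Icc.2 zero_le_one) hshift
  have hterm : ∀ k ∈ Icc 1 K, X / k - X / (k + 1 / d) = x * (1 / ((d * k : ℝ) * (d * k + 1))) := by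
    intro k hk
    have : (0 : ℝ) < k := by exact_mod_cast (mem_Icc.1 hk).1
    rw [hX_def]
    field_simp
    ring
  simp only [sub_zero] at hk
  simp only [add_zero, sub_sub_cancel] at hn
  rw [sum_sub_distrib, sum_congr rfl hterm, ← mul_sum] at hk
  rw [sum_sub_distrib, sum_const, Nat.card_Icc, Nat.add_sub_cancel, nsmul_eq_mul, mul_one_div] at hn
  rw [heq, add_sub_add_comm]
  exact (abs_add_le _ _).trans (by linarith)

lemma abs_floorDivCount_sub_le {x : ℝ} (hd : 0 < d) (hx : 1 ≤ x) :
    |floorDivCount d ⌊x⌋₊ - x * floorDivDensity d| ≤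
      2803 * ((x / d) ^ ((1 : ℝ) / 3) * (1 + log x)) := by
  have hd₁ : (1 : ℝ) ≤ d := by exact_mod_cast hd
  have hx₀ : 0 < x := by linarith
  have hlog := log_nonneg hx
  rcases le_or_gt (d : ℝ) x with hdx | hxd
  · have hX : 1 ≤ x / d := (one_le_div₀ (by positivity)).2 hdx
    have hlogX : log (x / d) ≤ log x := log_le_log (by positivity) (div_le_self hx₀.le hd₁)
    have hpow : 1 ≤ (x / d) ^ ((1 : ℝ) / 3) := one_le_rpow hX (by norm_num)
    obtain ⟨hlow, hup⟩ := main_terms_mem_Icc hd hdx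
    have hmain := abs_le.1 (abs_floorDivCount_sub_main_terms_le hd hdx)
    have : (x / d) ^ ((1 : ℝ) / 3) * (1 + log (x / d)) ≤ (x / d) ^ ((1 : ℝ) / 3) * (1 + log x) := by
      gcongr
    have : 1 ≤ (x / d) ^ ((1 : ℝ) / 3) * (1 + log x) := by nlinarith
    exact abs_le.2 ⟨by linarith, by linarith⟩
  · have hcount : floorDivCount d ⌊x⌋₊ = 0 := by
      rw [floorDivCount_eq_card_filter hd, Nat.div_eq_of_lt ((Nat.floor_lt hx₀.le).2 hxd)]
      rfl
    have hX : x / d ≤ 1 := div_le_one_of_le₀ hxd.le (by positivity)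
    rw [hcount, Nat.cast_zero, zero_sub, abs_neg,
      abs_of_nonneg (mul_nonneg hx₀.le (floorDivDensity_nonneg d))]
    calc x * floorDivDensity d ≤ x * (2 / (d : ℝ) ^ 2) := by gcongr; exact floorDivDensity_le hd
      _ = 2 * (x / d / d) := by field_simp
      _ ≤ 2 * (x / d) := by gcongr; exact div_le_self (by positivity) hd₁
      _ ≤ 2803 * ((x / d) ^ ((1 : ℝ) / 3) * (1 + 0)) := by
        have := rpow_le_rpow_of_exponent_ge (by positivity) hX (by norm_num : (1 : ℝ) / 3 ≤ 1)
        rw [rpow_one] at this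
        have : 0 < x / d := by positivity
        linarith
      _ ≤ _ := by gcongr

end FloorDiv

/-! ### Summation over divisors -/

section DivisorSums

open Real
open scoped ArithmeticFunction.zeta

variable (w : ArithmeticFunction ℝ)

lemma hasSum_ite_dvd {m : ℕ} (hm : m ≠ 0) :
    HasSum (fun d ↦ if d ∣ m then w d else 0) ((ζ * w) m) := by
  have hsupp : ∀ d ∉ m.divisors, (if d ∣ m then w d else 0) = 0 := fun d hd ↦
    if_neg fun h ↦ hd (Nat.mem_divisors.2 ⟨h, hm⟩)
  have hsum : (ζ * w) m = ∑ d ∈ m.divisors, if d ∣ m then w d else 0 := by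
    rw [ArithmeticFunction.coe_zeta_mul_apply]
    exact sum_congr rfl fun d hd ↦ (if_pos (Nat.dvd_of_mem_divisors hd)).symm
  exact hsum ▸ hasSum_sum_of_ne_finset_zero hsupp

lemma hasSum_mul_floorDivCount (y : ℕ) :
    HasSum (fun d ↦ w d * floorDivCount d y) (∑ n ∈ Icc 1 y, (ζ * w) (y / n)) := by
  have hcount (d : ℕ) :
      w d * floorDivCount d y = ∑ n ∈ Icc 1 y, if d ∣ y / n then w d else 0 := by
    rw [← sum_filter, sum_const, nsmul_eq_mul, mul_comm, floorDivCount]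
  simp only [hcount]
  refine hasSum_sum fun n hn ↦ hasSum_ite_dvd w ?_
  obtain ⟨hn₁, hny⟩ := mem_Icc.1 hn
  exact (Nat.div_pos hny hn₁).ne'

lemma hasSum_ite_dvd_floorDivDensity (d : ℕ) :
    HasSum (fun m : ℕ ↦ if d ∣ m then 1 / ((m : ℝ) * (m + 1)) else 0) (floorDivDensity d) := by
  obtain rfl | hd := Nat.eq_zero_or_pos d
  · have (m : ℕ) : (if 0 ∣ m then 1 / ((m : ℝ) * (m + 1)) else 0) = 0 := by
      simp +contextual [zero_dvd_iff]
    simp only [this]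
    simp [floorDivDensity]
  · have hsupp : ∀ m ∉ Set.range (d * ·), (if d ∣ m then 1 / ((m : ℝ) * (m + 1)) else 0) = 0 :=
      fun m hm ↦ if_neg fun ⟨k, hk⟩ ↦ hm ⟨k, hk.symm⟩
    rw [← (mul_right_injective₀ hd.ne').hasSum_iff hsupp]
    simpa only [Function.comp_def, dvd_mul_right, if_true, Nat.cast_mul, floorDivDensity] using
      (summable_floorDivDensity hd).hasSum

variable {w}

lemma abs_mul_floorDivDensity_le (d : ℕ) :
    |w d| * floorDivDensity d ≤ 2 * (|w d| / (d : ℝ) ^ ((1 : ℝ) / 3)) := by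
  obtain rfl | hd := Nat.eq_zero_or_pos d
  · simp
  have hd₁ : (1 : ℝ) ≤ d := by exact_mod_cast hd
  have hpow : (d : ℝ) ^ ((1 : ℝ) / 3) ≤ (d : ℝ) ^ 2 := by
    rw [← rpow_two]
    exact rpow_le_rpow_of_exponent_le hd₁ (by norm_num)
  calc |w d| * floorDivDensity d ≤ |w d| * (2 / (d : ℝ) ^ ((1 : ℝ) / 3)) := by
        gcongr
        exact (floorDivDensity_le hd).trans (by gcongr)
    _ = _ := by ring

lemma hasSum_mul_floorDivDensity (hw : Summable fun d : ℕ ↦ |w d| / (d : ℝ) ^ ((1 : ℝ) / 3)) :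
    HasSum (fun d ↦ w d * floorDivDensity d) (∑' m : ℕ, (ζ * w) m / (m * (m + 1))) := by
  let F (p : ℕ × ℕ) : ℝ := w p.1 * if p.1 ∣ p.2 then 1 / ((p.2 : ℝ) * (p.2 + 1)) else 0
  have hrow (d : ℕ) : HasSum (fun m ↦ F (d, m)) (w d * floorDivDensity d) :=
    (hasSum_ite_dvd_floorDivDensity d).mul_left (w d)
  have hcol (m : ℕ) : HasSum (fun d ↦ F (d, m)) ((ζ * w) m / (m * (m + 1))) := by
    obtain rfl | hm := eq_or_ne m 0
    · simp [F]
    · simpa only [F, mul_ite, ite_mul, mul_zero, zero_mul, mul_one_div, ite_div, zero_div] using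
        (hasSum_ite_dvd w hm).mul_right (1 / ((m : ℝ) * (m + 1)))
  have habs (d : ℕ) : HasSum (fun m ↦ |F (d, m)|) (|w d| * floorDivDensity d) := by
    have hnonneg (m : ℕ) : 0 ≤ if d ∣ m then 1 / ((m : ℝ) * (m + 1)) else 0 := by
      split_ifs <;> positivity
    simpa only [F, abs_mul, abs_of_nonneg (hnonneg _)] using
      (hasSum_ite_dvd_floorDivDensity d).mul_left |w d|
  have hF : Summable F := by
    refine Summable.of_abs ((summable_prod_of_nonneg fun p ↦ abs_nonneg _).2
      ⟨fun d ↦ (habs d).summable, ?_⟩)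
    simp only [(habs _).tsum_eq]
    exact Summable.of_nonneg_of_le (fun d ↦ mul_nonneg (abs_nonneg _) (floorDivDensity_nonneg d))
      abs_mul_floorDivDensity_le (hw.mul_left 2)
  have hswap := ((Equiv.prodComm ℕ ℕ).hasSum_iff.2 hF.hasSum).prod_fiberwise hcol
  rw [hswap.tsum_eq]
  exact hF.hasSum.prod_fiberwise hrow

lemma abs_sum_zeta_mul_div_sub_le {x : ℝ} (hx : 1 ≤ x)
    (hw : Summable fun d : ℕ ↦ |w d| / (d : ℝ) ^ ((1 : ℝ) / 3)) :
    |∑ n ∈ Icc 1 ⌊x⌋₊, (ζ * w) (⌊x⌋₊ / n) - x * ∑' m : ℕ, (ζ * w) m / (m * (m + 1))| ≤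
      2803 * (x ^ ((1 : ℝ) / 3) * (1 + log x)) *
        ∑' d : ℕ, |w d| / (d : ℝ) ^ ((1 : ℝ) / 3) := by
  have hdiff := (hasSum_mul_floorDivCount w ⌊x⌋₊).sub ((hasSum_mul_floorDivDensity hw).mul_left x)
  refine hdiff.norm_le_of_bounded (hw.hasSum.mul_left _) fun d ↦ ?_
  obtain rfl | hd := Nat.eq_zero_or_pos d
  · simp
  calc ‖w d * floorDivCount d ⌊x⌋₊ - x * (w d * floorDivDensity d)‖ =
        |w d| * |floorDivCount d ⌊x⌋₊ - x * floorDivDensity d| := by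
        rw [norm_eq_abs, ← abs_mul]
        ring_nf
    _ ≤ |w d| * (2803 * ((x / d) ^ ((1 : ℝ) / 3) * (1 + log x))) := by
        gcongr
        exact abs_floorDivCount_sub_le hd hx
    _ = _ := by
        rw [div_rpow (by positivity) (by positivity)]
        ring

theorem sum_dedekindPsi_ratio_floor_div_general (w : ArithmeticFunction ℝ)
    (hw : Summable fun d : ℕ ↦ |w d| / (d : ℝ) ^ ((1 : ℝ) / 3)) :
    (fun x : ℝ ↦ ∑ n ∈ Icc 1 ⌊x⌋₊, (ζ * w) ⌊x / (n : ℝ)⌋₊ -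
        x * ∑' m : ℕ, (ζ * w) m / (m * (m + 1)))
      =O[atTop] fun x : ℝ ↦ x ^ ((1 : ℝ) / 3) * log x := by
  set W := ∑' d : ℕ, |w d| / (d : ℝ) ^ ((1 : ℝ) / 3)
  have : 0 ≤ W := tsum_nonneg fun d ↦ by positivity
  refine Asymptotics.IsBigO.of_bound (2 * 2803 * W) ?_
  filter_upwards [eventually_ge_atTop (exp 1)] with x hx
  have hx₁ : 1 ≤ x := (one_le_exp zero_le_one).trans hx
  have hlog : 1 ≤ log x := (le_log_iff_exp_le (by positivity)).2 hx
  simp only [Nat.floor_div_natCast]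
  rw [norm_eq_abs, norm_of_nonneg (by positivity)]
  calc _ ≤ 2803 * (x ^ ((1 : ℝ) / 3) * (1 + log x)) * W := abs_sum_zeta_mul_div_sub_le hx₁ hw
    _ ≤ 2803 * (x ^ ((1 : ℝ) / 3) * (log x + log x)) * W := by gcongr
    _ = _ := by ring

end DivisorSums

section DedekindPsi

open scoped ArithmeticFunction.zeta

/-- The arithmetic function `μ²(d) / d`, whose Dirichlet convolution with `ζ` is `Ψ(n) / n`. -/
noncomputable def moebiusSqDiv : ArithmeticFunction ℝ :=
  ⟨fun d ↦ (ArithmeticFunction.moebius d : ℝ) ^ 2 / d, by simp⟩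

lemma abs_moebiusSqDiv_le (d : ℕ) : |moebiusSqDiv d| ≤ 1 / d := by
  have hsq : (ArithmeticFunction.moebius d : ℝ) ^ 2 ≤ 1 := by
    rw [sq_le_one_iff_abs_le_one]
    exact_mod_cast ArithmeticFunction.abs_moebius_le_one
  rw [moebiusSqDiv, ArithmeticFunction.coe_mk, abs_of_nonneg (by positivity)]
  gcongr

lemma summable_abs_moebiusSqDiv_div_rpow :
    Summable fun d : ℕ ↦ |moebiusSqDiv d| / (d : ℝ) ^ ((1 : ℝ) / 3) := by
  refine Summable.of_nonneg_of_le (fun d ↦ by positivity) (fun d ↦ ?_)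
    (Real.summable_one_div_nat_rpow.2 (by norm_num : (1 : ℝ) < 1 + 1 / 3))
  rw [Real.rpow_add' (by positivity) (by norm_num), Real.rpow_one, ← div_div]
  gcongr
  exact abs_moebiusSqDiv_le d

lemma dedekindPsi_div_self (m : ℕ) : dedekindPsi m / m = (ζ * moebiusSqDiv) m := by
  obtain rfl | hm := eq_or_ne m 0
  · simp
  have hm₀ : (m : ℝ) ≠ 0 := by exact_mod_cast hm
  rw [ArithmeticFunction.coe_zeta_mul_apply, dedekindPsi, ← Nat.sum_div_divisors m, sum_div]
  refine sum_congr rfl fun d hd ↦ ?_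
  have hd₀ : (d : ℝ) ≠ 0 := by exact_mod_cast (Nat.pos_of_mem_divisors hd).ne'
  have hdm := Nat.dvd_of_mem_divisors hd
  rw [moebiusSqDiv, ArithmeticFunction.coe_mk, Nat.cast_div hdm hd₀, Nat.div_div_self hdm hm]
  field_simp

lemma dedekindPsi_div_sq_mul (m : ℕ) :
    dedekindPsi m / (m ^ 2 * (m + 1)) = (ζ * moebiusSqDiv) m / (m * (m + 1)) := by
  rw [← dedekindPsi_div_self, div_div, ← mul_assoc, sq]

end DedekindPsi

/-- `∑_{n ≤ x} Ψ(⌊x/n⌋)/⌊x/n⌋ = x ∑_{m ≥ 1} Ψ(m)/(m²(m+1)) + O(x^{1/3} log x)`. -/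
theorem sum_dedekindPsi_ratio_floor_div :
    (fun x : ℝ =>
        (∑ n ∈ Finset.Icc 1 ⌊x⌋₊,
          dedekindPsi ⌊x / (n : ℝ)⌋₊ / (⌊x / (n : ℝ)⌋₊ : ℝ)) -
        x * ∑' m : ℕ, dedekindPsi m / (m ^ 2 * (m + 1)))
    =O[atTop] fun x : ℝ => x ^ ((1 : ℝ) / 3) * Real.log x := by
  simp only [dedekindPsi_div_self, dedekindPsi_div_sq_mul]
  exact sum_dedekindPsi_ratio_floor_div_general moebiusSqDiv summable_abs_moebiusSqDiv_div_rpow
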